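/- Let f : ℂ → ℂ be a nonconstant holomorphic (entire) function. Define h(z) = |f′(z)|²·(1 + |f(z)|²·u(|f(z)|²)²) + 1 on ℂ∖f⁻¹(0), and let K denote the Gaussian curvature of the conformal metric h(z)|dz|² on ℂ∖f⁻¹(0). Then K(p) ≤ 0 for every p ∈ ℂ with f(p) ≠ 0. -/

import Mathlib

open Complex Filter Topology Metric
open scoped ComplexOrder

/-- The function `u(t) = (t-1)/(t log t)` for `t ≠ 1`, extended by `u(1) = 1`. -/
noncomputable def u (t : ℝ) : ℝ := if t = 1 then 1 else (t - 1) / (t * Real.log t)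

/-- Wirtinger derivative `∂g` of a complex-valued function on `ℂ` (real-differentiable sense). -/
noncomputable def wdz (g : ℂ → ℂ) (z : ℂ) : ℂ :=
  (fderiv ℝ g z 1 - Complex.I * fderiv ℝ g z Complex.I) / 2

/-- Wirtinger derivative `∂̄g` of a complex-valued function on `ℂ`. -/
noncomputable def wdzbar (g : ℂ → ℂ) (z : ℂ) : ℂ :=
  (fderiv ℝ g z 1 + Complex.I * fderiv ℝ g z Complex.I) / 2

/-- `∂h` for a real-valued `h`. -/
noncomputable def wdzR (h : ℂ → ℝ) : ℂ → ℂ := wdz fun w => (h w : ℂ)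

/-- `∂̄h` for a real-valued `h`. -/
noncomputable def wdzbarR (h : ℂ → ℝ) : ℂ → ℂ := wdzbar fun w => (h w : ℂ)

/-- `∂∂̄h` for a real-valued `h`. -/
noncomputable def wlapR (h : ℂ → ℝ) : ℂ → ℂ := wdz (wdzbarR h)

/-- The numerator `h·∂∂̄h − ∂h·∂̄h` of (−1/2 times) the Gaussian curvature of `h|dz|²`. -/
noncomputable def curvNum (h : ℂ → ℝ) (z : ℂ) : ℂ :=
  (h z : ℂ) * wlapR h z - wdzR h z * wdzbarR h z

/-- The Gaussian curvature `K = −2(h·∂∂̄h − ∂h·∂̄h)/h³` of the conformal metric `h|dz|²`. -/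
noncomputable def gaussCurv (h : ℂ → ℝ) (z : ℂ) : ℂ :=
  -2 * curvNum h z / (h z : ℂ) ^ 3

/-!
The inequality `K ≤ 0` says that `N(h) = h ∂∂̄h - ∂h ∂̄h` is nonnegative, i.e. that `log h` is
subharmonic. Substituting `r = exp x` turns `r * u (r ^ 2)` into `sinhc x = sinh x / x`, which is
log-convex on `ℝ`, hence so is `G = 1 + sinhc ^ 2`. Since `log ‖f‖` is harmonic off the zeros of
`f`, the function `φ = G (log ‖f‖)` satisfies `N(φ) ≥ 0`. Finally
`N(‖g‖² φ + c) = ‖g‖⁴ N(φ) + c ∂∂̄(‖g‖² φ)` for holomorphic `g`, here `g = f'` and `c = 1`, and the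
last term is nonnegative because `φ ∂∂̄(‖g‖² φ) = ‖g' φ + g ∂φ‖² + ‖g‖² N(φ)`.
-/

open InnerProductSpace
open scoped ComplexConjugate ContDiff

section RealDerivative

variable {E : Type*} [NormedAddCommGroup E] [NormedSpace ℝ E]

theorem fderiv_conj_apply (g : E → ℂ) (x v : E) :
    fderiv ℝ (fun y => conj (g y)) x v = conj (fderiv ℝ g x v) :=
  congrArg (· v) (conjCLE.comp_fderiv (f := g) (x := x))

theorem differentiableAt_ofReal_comp {h : E → ℝ} {x : E} (hh : DifferentiableAt ℝ h x) :
    DifferentiableAt ℝ (fun y => (h y : ℂ)) x :=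
  ofRealCLM.differentiableAt.comp x hh

theorem fderiv_real_apply_of_differentiableAt {g : ℂ → ℂ} {z : ℂ} (hg : DifferentiableAt ℂ g z)
    (v : ℂ) : fderiv ℝ g z v = v * deriv g z := by
  simp [hg.fderiv_restrictScalars ℝ]

end RealDerivative

section Wirtinger

variable {g k : ℂ → ℂ} {h l : ℂ → ℝ} {z : ℂ}

theorem wdz_add (hg : DifferentiableAt ℝ g z) (hk : DifferentiableAt ℝ k z) :
    wdz (fun w => g w + k w) z = wdz g z + wdz k z := by
  simp only [wdz, fderiv_fun_add hg hk, add_apply]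
  ring

theorem wdz_mul (hg : DifferentiableAt ℝ g z) (hk : DifferentiableAt ℝ k z) :
    wdz (fun w => g w * k w) z = g z * wdz k z + k z * wdz g z := by
  simp only [wdz, fderiv_fun_mul hg hk, add_apply, smul_apply, smul_eq_mul]
  ring

theorem wdz_of_differentiableAt (hg : DifferentiableAt ℂ g z) : wdz g z = deriv g z := by
  simp only [wdz, fderiv_real_apply_of_differentiableAt hg]
  linear_combination (-deriv g z / 2) * I_mul_I

theorem wdzbar_of_differentiableAt (hg : DifferentiableAt ℂ g z) : wdzbar g z = 0 := by
  simp only [wdzbar, fderiv_real_apply_of_differentiableAt hg]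
  linear_combination (deriv g z / 2) * I_mul_I

theorem wdz_conj (g : ℂ → ℂ) (z : ℂ) : wdz (fun w => conj (g w)) z = conj (wdzbar g z) := by
  simp [wdz, wdzbar, fderiv_conj_apply, sub_eq_add_neg, map_ofNat]

theorem wdzbar_conj (g : ℂ → ℂ) (z : ℂ) : wdzbar (fun w => conj (g w)) z = conj (wdz g z) := by
  simp [wdz, wdzbar, fderiv_conj_apply, sub_eq_add_neg, map_ofNat]

theorem wdzbarR_eq_conj_wdzR (h : ℂ → ℝ) (z : ℂ) : wdzbarR h z = conj (wdzR h z) := by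
  rw [wdzR, ← wdzbar_conj]
  simp only [conj_ofReal, wdzbarR]

theorem wdz_wdzbar_eq_laplacian (hg : ContDiffAt ℝ 2 g z) :
    wdz (wdzbar g) z = Laplacian.laplacian g z / 4 := by
  have hd : DifferentiableAt ℝ (fderiv ℝ g) z :=
    (hg.fderiv_right (m := 1) le_rfl).differentiableAt one_ne_zero
  have hsymm : fderiv ℝ (fderiv ℝ g) z I 1 = fderiv ℝ (fderiv ℝ g) z 1 I :=
    hg.isSymmSndFDerivAt (by simp) I 1
  have hbar (v : ℂ) : fderiv ℝ (wdzbar g) z v =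
      (fderiv ℝ (fderiv ℝ g) z v 1 + I * fderiv ℝ (fderiv ℝ g) z v I) / 2 := by
    have happly (w : ℂ) : HasFDerivAt (fun y => fderiv ℝ g y w) _ z :=
      hd.hasFDerivAt.clm_apply (hasFDerivAt_const w z)
    have hw := ((happly 1).add ((happly I).const_mul I)).mul_const (2⁻¹ : ℂ)
    simp only [← div_eq_mul_inv] at hw
    simp [HasFDerivAt.fderiv (f := wdzbar g) hw, div_eq_inv_mul, mul_add]
  rw [wdz, hbar, hbar, laplacian_eq_iteratedFDeriv_complexPlane]
  simp only [iteratedFDeriv_two_apply, Matrix.cons_val_zero, Matrix.cons_val_one, hsymm]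
  linear_combination (-fderiv ℝ (fderiv ℝ g) z I I / 4) * I_mul_I

theorem wlapR_eq_laplacian (hh : ContDiffAt ℝ 2 h z) :
    wlapR h z = (Laplacian.laplacian h z : ℂ) / 4 :=
  (wdz_wdzbar_eq_laplacian (ofRealCLM.contDiff.contDiffAt.comp z hh)).trans
    (congrArg (· / 4) (hh.laplacian_CLM_comp_left (l := ofRealCLM)))

theorem wlapR_eq_zero_of_harmonicAt (hh : HarmonicAt h z) : wlapR h z = 0 := by
  simp [wlapR_eq_laplacian hh.1, hh.2.self_of_nhds]

theorem differentiableAt_wdzbarR (hh : ContDiffAt ℝ 2 h z) :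
    DifferentiableAt ℝ (wdzbarR h) z := by
  have hd : DifferentiableAt ℝ (fderiv ℝ fun w => (h w : ℂ)) z :=
    ((ofRealCLM.contDiff.contDiffAt.comp z hh).fderiv_right (m := 1) le_rfl).differentiableAt
      one_ne_zero
  unfold wdzbarR wdzbar
  fun_prop

theorem wdz_eventuallyEq (hgk : g =ᶠ[𝓝 z] k) : wdz g =ᶠ[𝓝 z] wdz k :=
  (hgk.fderiv (𝕜 := ℝ)).mono fun w hw => by rw [wdz, wdz, hw]

theorem wdzbar_eventuallyEq (hgk : g =ᶠ[𝓝 z] k) : wdzbar g =ᶠ[𝓝 z] wdzbar k :=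
  (hgk.fderiv (𝕜 := ℝ)).mono fun w hw => by rw [wdzbar, wdzbar, hw]

theorem wdzR_eq_fderiv (hh : DifferentiableAt ℝ h z) :
    wdzR h z = (fderiv ℝ h z 1 - I * fderiv ℝ h z I) / 2 := by
  have hfd : fderiv ℝ (fun w => (h w : ℂ)) z = ofRealCLM ∘L fderiv ℝ h z :=
    (ofRealCLM.hasFDerivAt.comp z hh.hasFDerivAt).fderiv
  simp [wdzR, wdz, hfd]

theorem wdzR_mul (hh : DifferentiableAt ℝ h z) (hl : DifferentiableAt ℝ l z) :
    wdzR (fun w => h w * l w) z = h z * wdzR l z + l z * wdzR h z := by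
  simp only [wdzR, ofReal_mul]
  exact wdz_mul (differentiableAt_ofReal_comp hh) (differentiableAt_ofReal_comp hl)

theorem wdzR_comp {G : ℝ → ℝ} (hG : DifferentiableAt ℝ G (h z)) (hh : DifferentiableAt ℝ h z) :
    wdzR (fun w => G (h w)) z = deriv G (h z) * wdzR h z := by
  have hfd : fderiv ℝ (fun w => G (h w)) z = deriv G (h z) • fderiv ℝ h z :=
    (hG.hasDerivAt.comp_hasFDerivAt z hh.hasFDerivAt).fderiv
  rw [wdzR_eq_fderiv (by fun_prop), wdzR_eq_fderiv hh, hfd]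
  simp only [smul_apply, smul_eq_mul, ofReal_mul]
  ring

theorem wdzR_add_const (h : ℂ → ℝ) (c : ℝ) : wdzR (fun w => h w + c) = wdzR h := by
  ext z
  simp [wdzR, wdz]

theorem wlapR_add_const (h : ℂ → ℝ) (c : ℝ) : wlapR (fun w => h w + c) = wlapR h := by
  have hbar : wdzbarR (fun w => h w + c) = wdzbarR h := by
    ext z
    simp only [wdzbarR_eq_conj_wdzR, wdzR_add_const]
  rw [wlapR, wlapR, hbar]

theorem wlapR_mul (hh : ContDiffAt ℝ 2 h z) (hl : ContDiffAt ℝ 2 l z) :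
    wlapR (fun w => h w * l w) z =
      h z * wlapR l z + wdzR h z * wdzbarR l z + wdzR l z * wdzbarR h z + l z * wlapR h z := by
  have hbar : wdzbarR (fun w => h w * l w) =ᶠ[𝓝 z]
      fun w => h w * wdzbarR l w + l w * wdzbarR h w := by
    filter_upwards [hh.eventually (by simp), hl.eventually (by simp)] with w hhw hlw
    simp [wdzbarR_eq_conj_wdzR,
      wdzR_mul (hhw.differentiableAt two_ne_zero) (hlw.differentiableAt two_ne_zero)]
  have hh' := differentiableAt_ofReal_comp (hh.differentiableAt two_ne_zero)
  have hl' := differentiableAt_ofReal_comp (hl.differentiableAt two_ne_zero)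
  have hdh := differentiableAt_wdzbarR hh
  have hdl := differentiableAt_wdzbarR hl
  rw [wlapR, (wdz_eventuallyEq hbar).self_of_nhds, wdz_add (hh'.fun_mul hdl) (hl'.fun_mul hdh),
    wdz_mul hh' hdl, wdz_mul hl' hdh]
  simp only [wlapR, wdzR]
  ring

theorem wlapR_comp {G : ℝ → ℝ} (hG : ContDiffAt ℝ 2 G (h z)) (hh : ContDiffAt ℝ 2 h z) :
    wlapR (fun w => G (h w)) z =
      deriv (deriv G) (h z) * (wdzR h z * wdzbarR h z) + deriv G (h z) * wlapR h z := by
  have hhd : DifferentiableAt ℝ h z := hh.differentiableAt two_ne_zero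
  have hbar : wdzbarR (fun w => G (h w)) =ᶠ[𝓝 z] fun w => deriv G (h w) * wdzbarR h w := by
    filter_upwards [hh.continuousAt.eventually (hG.eventually (by simp)), hh.eventually (by simp)]
      with w hGw hhw
    simp [wdzbarR_eq_conj_wdzR,
      wdzR_comp (hGw.differentiableAt two_ne_zero) (hhw.differentiableAt two_ne_zero)]
  have hG' : DifferentiableAt ℝ (deriv G) (h z) :=
    (hG.derivWithin (m := 1) le_rfl).differentiableAt one_ne_zero
  have hG'h : DifferentiableAt ℝ (fun w => deriv G (h w)) z := hG'.comp z hhd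
  have hcomp : wdz (fun w => ((deriv G (h w) : ℝ) : ℂ)) z = deriv (deriv G) (h z) * wdzR h z :=
    wdzR_comp hG' hhd
  rw [wlapR, (wdz_eventuallyEq hbar).self_of_nhds,
    wdz_mul (differentiableAt_ofReal_comp hG'h) (differentiableAt_wdzbarR hh),
    hcomp, wlapR]
  ring

theorem wdz_mul_conj (hg : DifferentiableAt ℂ g z) (hk : DifferentiableAt ℂ k z) :
    wdz (fun w => g w * conj (k w)) z = deriv g z * conj (k z) := by
  have hkc : DifferentiableAt ℝ (fun w => conj (k w)) z := (hk.restrictScalars ℝ).star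
  rw [wdz_mul (hg.restrictScalars ℝ) hkc, wdz_conj, wdzbar_of_differentiableAt hk,
    wdz_of_differentiableAt hg, map_zero, mul_zero, zero_add, mul_comm]

theorem wdzR_norm_sq (hg : DifferentiableAt ℂ g z) :
    wdzR (fun w => ‖g w‖ ^ 2) z = deriv g z * conj (g z) := by
  simp only [wdzR, ofReal_pow, ← mul_conj', wdz_mul_conj hg hg]

theorem wlapR_norm_sq (hg : AnalyticAt ℂ g z) :
    wlapR (fun w => ‖g w‖ ^ 2) z = deriv g z * conj (deriv g z) := by
  have hbar : wdzbarR (fun w => ‖g w‖ ^ 2) =ᶠ[𝓝 z] fun w => g w * conj (deriv g w) := by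
    filter_upwards [hg.eventually_analyticAt] with w hw
    simp [wdzbarR_eq_conj_wdzR, wdzR_norm_sq hw.differentiableAt, mul_comm]
  rw [wlapR, (wdz_eventuallyEq hbar).self_of_nhds,
    wdz_mul_conj hg.differentiableAt hg.deriv.differentiableAt]

end Wirtinger

section Curvature

variable {g : ℂ → ℂ} {h l φ v : ℂ → ℝ} {z : ℂ}

theorem gaussCurv_congr (hhl : h =ᶠ[𝓝 z] l) : gaussCurv h z = gaussCurv l z := by
  have hC : (fun w => (h w : ℂ)) =ᶠ[𝓝 z] fun w => (l w : ℂ) := hhl.fun_comp ofReal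
  have hwdz : wdzR h z = wdzR l z := (wdz_eventuallyEq hC).self_of_nhds
  have hwdzbar : wdzbarR h =ᶠ[𝓝 z] wdzbarR l := wdzbar_eventuallyEq hC
  have hwlap : wlapR h z = wlapR l z := (wdz_eventuallyEq hwdzbar).self_of_nhds
  simp only [gaussCurv, curvNum, hhl.self_of_nhds, hwdz, hwdzbar.self_of_nhds, hwlap]

theorem gaussCurv_nonpos (hh : 0 ≤ h z) (hN : 0 ≤ curvNum h z) : gaussCurv h z ≤ 0 := by
  have hfactor : gaussCurv h z = -(((2 / h z ^ 3 : ℝ) : ℂ) * curvNum h z) := by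
    rw [gaussCurv]
    push_cast
    ring
  rw [hfactor]
  exact neg_nonpos.2 (mul_nonneg (zero_le_real.2 (by positivity)) hN)

theorem curvNum_add_const (h : ℂ → ℝ) (c : ℝ) (z : ℂ) :
    curvNum (fun w => h w + c) z = curvNum h z + c * wlapR h z := by
  simp only [curvNum, wdzbarR_eq_conj_wdzR, wdzR_add_const, wlapR_add_const, ofReal_add]
  ring

theorem curvNum_comp_of_harmonicAt {G : ℝ → ℝ} (hG : ContDiffAt ℝ 2 G (v z))
    (hv : HarmonicAt v z) :
    curvNum (fun w => G (v w)) z =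
      ((G (v z) * deriv (deriv G) (v z) - deriv G (v z) ^ 2 : ℝ) : ℂ) *
        (wdzR v z * conj (wdzR v z)) := by
  simp only [curvNum, wlapR_comp hG hv.1, wlapR_eq_zero_of_harmonicAt hv, wdzbarR_eq_conj_wdzR,
    wdzR_comp (hG.differentiableAt two_ne_zero) (hv.1.differentiableAt two_ne_zero), map_mul,
    conj_ofReal]
  push_cast
  ring

theorem contDiffAt_norm_sq {n : ℕ∞ω} (hg : AnalyticAt ℂ g z) :
    ContDiffAt ℝ n (fun w => ‖g w‖ ^ 2) z :=
  (hg.contDiffAt.restrict_scalars ℝ).norm_sq ℝ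

theorem curvNum_norm_sq_mul (hg : AnalyticAt ℂ g z) (hφ : ContDiffAt ℝ 2 φ z) :
    curvNum (fun w => ‖g w‖ ^ 2 * φ w) z = ((‖g z‖ ^ 4 : ℝ) : ℂ) * curvNum φ z := by
  have hg2 : ContDiffAt ℝ 2 (fun w => ‖g w‖ ^ 2) z := contDiffAt_norm_sq hg
  simp only [curvNum, wlapR_mul hg2 hφ, wlapR_norm_sq hg, wdzbarR_eq_conj_wdzR,
    wdzR_mul (hg2.differentiableAt two_ne_zero) (hφ.differentiableAt two_ne_zero),
    wdzR_norm_sq hg.differentiableAt, map_add, map_mul, conj_ofReal, conj_conj]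
  have hnorm : ((‖g z‖ ^ 2 : ℝ) : ℂ) = g z * conj (g z) := by rw [mul_conj', ofReal_pow]
  rw [show ‖g z‖ ^ 4 = ‖g z‖ ^ 2 * ‖g z‖ ^ 2 by ring]
  simp only [ofReal_mul, hnorm]
  ring

theorem wlapR_norm_sq_mul_nonneg (hg : AnalyticAt ℂ g z) (hφ : ContDiffAt ℝ 2 φ z)
    (hpos : 0 < φ z) (hN : 0 ≤ curvNum φ z) : 0 ≤ wlapR (fun w => ‖g w‖ ^ 2 * φ w) z := by
  have hφC : (φ z : ℂ) ≠ 0 := ofReal_ne_zero.2 hpos.ne'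
  have hnorm : ((‖g z‖ ^ 2 : ℝ) : ℂ) = g z * conj (g z) := by rw [mul_conj', ofReal_pow]
  set a : ℂ := deriv g z * φ z + g z * wdzR φ z with ha
  have hsq : wlapR (fun w => ‖g w‖ ^ 2 * φ w) z =
      ((φ z)⁻¹ : ℝ) * (((‖a‖ ^ 2 : ℝ) : ℂ) + ((‖g z‖ ^ 2 : ℝ) : ℂ) * curvNum φ z) := by
    rw [wlapR_mul (contDiffAt_norm_sq hg) hφ, wlapR_norm_sq hg, hnorm, ofReal_inv,
      eq_inv_mul_iff_mul_eq₀ hφC, ofReal_pow, ← mul_conj', curvNum, ha]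
    simp only [wdzbarR_eq_conj_wdzR, wdzR_norm_sq hg.differentiableAt, map_add, map_mul,
      conj_ofReal, conj_conj]
    ring
  rw [hsq]
  exact mul_nonneg (zero_le_real.2 (inv_nonneg.2 hpos.le))
    (add_nonneg (zero_le_real.2 (sq_nonneg _)) (mul_nonneg (zero_le_real.2 (sq_nonneg _)) hN))

theorem curvNum_norm_sq_mul_add_const_nonneg {c : ℝ} (hg : AnalyticAt ℂ g z)
    (hφ : ContDiffAt ℝ 2 φ z) (hpos : 0 < φ z) (hN : 0 ≤ curvNum φ z) (hc : 0 ≤ c) :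
    0 ≤ curvNum (fun w => ‖g w‖ ^ 2 * φ w + c) z := by
  rw [curvNum_add_const, curvNum_norm_sq_mul hg hφ]
  exact add_nonneg (mul_nonneg (zero_le_real.2 (by positivity)) hN)
    (mul_nonneg (zero_le_real.2 hc) (wlapR_norm_sq_mul_nonneg hg hφ hpos hN))

end Curvature

theorem one_add_sq_mul_deriv_deriv_sub_sq_nonneg {s : ℝ → ℝ} {x : ℝ} (hs : ContDiffAt ℝ 2 s x)
    (hx : 0 ≤ s x * deriv (deriv s) x - deriv s x ^ 2) :
    0 ≤ (1 + s x ^ 2) * deriv (deriv fun y => 1 + s y ^ 2) x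
      - deriv (fun y => 1 + s y ^ 2) x ^ 2 := by
  have hderiv : deriv (fun y => 1 + s y ^ 2) =ᶠ[𝓝 x] fun y => 2 * (s y * deriv s y) := by
    filter_upwards [hs.eventually (by simp)] with y hy
    have hpow := ((hy.differentiableAt two_ne_zero).hasDerivAt.fun_pow 2).const_add 1
    rw [hpow.deriv]
    ring
  have hs1 : HasDerivAt s (deriv s x) x := (hs.differentiableAt two_ne_zero).hasDerivAt
  have hs2 : HasDerivAt (deriv s) (deriv (deriv s) x) x :=
    ((hs.derivWithin (m := 1) le_rfl).differentiableAt one_ne_zero).hasDerivAt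
  rw [hderiv.deriv_eq, hderiv.self_of_nhds, ((hs1.fun_mul hs2).const_mul 2).deriv]
  linarith [mul_nonneg (add_nonneg zero_le_one (sq_nonneg (s x))) hx, sq_nonneg (deriv s x)]

theorem analyticAt_dslope {𝕜 E : Type*} [NontriviallyNormedField 𝕜] [NormedAddCommGroup E]
    [NormedSpace 𝕜 E] {f : 𝕜 → E} {a b : 𝕜} (ha : AnalyticAt 𝕜 f a) (hb : AnalyticAt 𝕜 f b) :
    AnalyticAt 𝕜 (dslope f a) b := by
  rcases eq_or_ne b a with rfl | hne
  · obtain ⟨p, hp⟩ := ha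
    exact hp.has_fpower_series_dslope_fslope.analyticAt
  · have hslope : slope f a =ᶠ[𝓝 b] dslope f a := (dslope_eventuallyEq_slope_of_ne f hne).symm
    have hsub : b - a ≠ 0 := sub_ne_zero.2 hne
    refine AnalyticAt.congr ?_ hslope
    simp only [slope_fun_def]
    exact ((analyticAt_id.sub analyticAt_const).inv hsub).smul (hb.sub analyticAt_const)

/-- The hyperbolic analogue `sinh x / x` of `Real.sinc`, with value `1` at the origin. -/
noncomputable def sinhc : ℝ → ℝ := dslope Real.sinh 0

theorem mul_sinhc (x : ℝ) : x * sinhc x = Real.sinh x := by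
  simpa [sinhc] using sub_smul_dslope Real.sinh 0 x

theorem sinhc_zero : sinhc 0 = 1 := by
  simp [sinhc]

theorem contDiff_sinhc {n : ℕ∞ω} : ContDiff ℝ n sinhc :=
  contDiff_iff_contDiffAt.2 fun _ =>
    (analyticAt_dslope Real.analyticAt_sinh Real.analyticAt_sinh).contDiffAt

theorem hasDerivAt_sinhc (x : ℝ) : HasDerivAt sinhc (deriv sinhc x) x :=
  (contDiff_sinhc.differentiable one_ne_zero x).hasDerivAt

theorem hasDerivAt_deriv_sinhc (x : ℝ) : HasDerivAt (deriv sinhc) (deriv (deriv sinhc) x) x :=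
  ((contDiff_sinhc (n := 2)).deriv'.differentiable one_ne_zero x).hasDerivAt

theorem sinhc_add_mul_deriv (x : ℝ) : sinhc x + x * deriv sinhc x = Real.cosh x := by
  have hmul : HasDerivAt (fun y => y * sinhc y) (1 * sinhc x + x * deriv sinhc x) x :=
    (hasDerivAt_id x).mul (hasDerivAt_sinhc x)
  simp only [mul_sinhc, one_mul] at hmul
  exact hmul.unique (Real.hasDerivAt_sinh x)

theorem two_mul_deriv_sinhc_add_mul_deriv (x : ℝ) :
    2 * deriv sinhc x + x * deriv (deriv sinhc) x = Real.sinh x := by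
  have hadd : HasDerivAt (fun y => sinhc y + y * deriv sinhc y)
      (deriv sinhc x + (1 * deriv sinhc x + x * deriv (deriv sinhc) x)) x :=
    (hasDerivAt_sinhc x).add ((hasDerivAt_id x).mul (hasDerivAt_deriv_sinhc x))
  simp only [sinhc_add_mul_deriv] at hadd
  linear_combination hadd.unique (Real.hasDerivAt_cosh x)

theorem one_le_sinhc_sq (x : ℝ) : 1 ≤ sinhc x ^ 2 := by
  rcases eq_or_ne x 0 with rfl | hx
  · simp [sinhc_zero]
  · have habs : |x| ≤ |Real.sinh x| := by
      rw [Real.abs_sinh]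
      exact Real.self_le_sinh_iff.2 (abs_nonneg x)
    have hsq : x ^ 2 * 1 ≤ x ^ 2 * sinhc x ^ 2 := by
      rw [mul_one, ← mul_pow, mul_sinhc]
      exact sq_le_sq.2 habs
    exact le_of_mul_le_mul_left hsq (by positivity)

theorem sq_mul_sinhc_mul_deriv_deriv_sub_sq (x : ℝ) :
    x ^ 2 * (sinhc x * deriv (deriv sinhc) x - deriv sinhc x ^ 2) = sinhc x ^ 2 - 1 := by
  rw [← Real.cosh_sq_sub_sinh_sq x]
  linear_combination x * sinhc x * two_mul_deriv_sinhc_add_mul_deriv x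
    - (sinhc x + x * deriv sinhc x + Real.cosh x) * sinhc_add_mul_deriv x
    + Real.sinh x * mul_sinhc x

theorem sinhc_mul_deriv_deriv_sub_sq_nonneg (x : ℝ) :
    0 ≤ sinhc x * deriv (deriv sinhc) x - deriv sinhc x ^ 2 := by
  refine (dense_compl_singleton (0 : ℝ)).induction (fun y hy => ?_) ?_ x
  · have hy2 : 0 < y ^ 2 := sq_pos_of_ne_zero hy
    refine nonneg_of_mul_nonneg_right ?_ hy2
    rw [sq_mul_sinhc_mul_deriv_deriv_sub_sq]
    exact sub_nonneg.2 (one_le_sinhc_sq y)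
  · have h0 : Continuous sinhc := (contDiff_sinhc (n := 0)).continuous
    have h1 : ContDiff ℝ 1 (deriv sinhc) := (contDiff_sinhc (n := 2)).deriv'
    have h2 : Continuous (deriv (deriv sinhc)) := h1.continuous_deriv le_rfl
    exact isClosed_le continuous_const ((h0.mul h2).sub (h1.continuous.pow 2))

theorem mul_u_sq_eq_sinhc_log {r : ℝ} (hr : 0 < r) : r * u (r ^ 2) = sinhc (Real.log r) := by
  rcases eq_or_ne r 1 with rfl | hr1
  · simp [u, sinhc_zero]
  · have hlog : Real.log r ≠ 0 := Real.log_ne_zero_of_pos_of_ne_one hr hr1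
    have hsq : r ^ 2 ≠ 1 := (pow_eq_one_iff_of_nonneg hr.le two_ne_zero).not.2 hr1
    rw [← mul_right_inj' hlog, mul_sinhc, Real.sinh_log hr, u, if_neg hsq, Real.log_pow]
    push_cast
    field_simp

theorem stmt6_general {f g : ℂ → ℂ} {p : ℂ} (hf : AnalyticAt ℂ f p) (hg : AnalyticAt ℂ g p)
    (hfp : f p ≠ 0) :
    gaussCurv (fun z => ‖g z‖ ^ 2 * (1 + ‖f z‖ ^ 2 * u (‖f z‖ ^ 2) ^ 2) + 1) p ≤ 0 := by
  let G : ℝ → ℝ := fun x => 1 + sinhc x ^ 2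
  have hG {x : ℝ} : ContDiffAt ℝ 2 G x := (contDiff_const.add (contDiff_sinhc.pow 2)).contDiffAt
  have hlog : HarmonicAt (fun z => Real.log ‖f z‖) p := hf.harmonicAt_log_norm hfp
  have hmetric : (fun z => ‖g z‖ ^ 2 * (1 + ‖f z‖ ^ 2 * u (‖f z‖ ^ 2) ^ 2) + 1) =ᶠ[𝓝 p]
      fun z => ‖g z‖ ^ 2 * G (Real.log ‖f z‖) + 1 := by
    filter_upwards [hf.continuousAt.eventually_ne hfp] with z hz
    rw [← mul_pow, mul_u_sq_eq_sinhc_log (norm_pos_iff.2 hz)]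
  have hN : 0 ≤ curvNum (fun z => G (Real.log ‖f z‖)) p := by
    rw [curvNum_comp_of_harmonicAt hG hlog]
    exact mul_nonneg (zero_le_real.2 (one_add_sq_mul_deriv_deriv_sub_sq_nonneg
      contDiff_sinhc.contDiffAt (sinhc_mul_deriv_deriv_sub_sq_nonneg _)))
      (mul_star_self_nonneg _)
  rw [gaussCurv_congr hmetric]
  exact gaussCurv_nonpos (by positivity) (curvNum_norm_sq_mul_add_const_nonneg hg
    (hG.comp p hlog.1) (by positivity) hN zero_le_one)

/-- for a nonconstant entire `f`, the Gaussian curvature of the metric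
`h(z)|dz|²` with `h = |f′|²(1 + |f|²u(|f|²)²) + 1` is `≤ 0` at every point off the zero
set of `f`. -/
theorem stmt6 (f : ℂ → ℂ) (hf : Differentiable ℂ f)
    (hfnc : ¬ ∃ c : ℂ, ∀ z, f z = c)
    (p : ℂ) (hfp : f p ≠ 0) :
    gaussCurv (fun z =>
      ‖deriv f z‖ ^ 2 * (1 + ‖f z‖ ^ 2 * u (‖f z‖ ^ 2) ^ 2) + 1) p ≤ 0 :=
  stmt6_general (hf.analyticAt p) (hf.analyticAt p).deriv hfp
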